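/- For every integer n ≥ 6, no two-element subset of the vertex set of the heptagonal circular ladder Γ_n is an edge resolving set of Γ_n; equivalently, for every pair of vertices a, b of Γ_n there exist two distinct edges e, f with d(a,e) = d(a,f) and d(b,e) = d(b,f). -/

import Mathlib

/-- Vertices of the heptagonal circular ladder: four families indexed by `ZMod n`. -/
inductive HCLVertex (n : ℕ) : Type
  | p (t : ZMod n) : HCLVertex n
  | q (t : ZMod n) : HCLVertex n
  | r (t : ZMod n) : HCLVertex n
  | s (t : ZMod n) : HCLVertex n
deriving DecidableEq

/-- Base relation giving the edges of the heptagonal circular ladder `Γ_n`: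
`p_t p_{t+1}`, `p_t q_t`, `q_t r_t`, `r_t s_t`, `s_t r_{t+1}` (indices mod `n`). -/
def gammaRel (n : ℕ) : HCLVertex n → HCLVertex n → Prop
  | .p t, .p u => u = t + 1
  | .p t, .q u => u = t
  | .q t, .r u => u = t
  | .r t, .s u => u = t
  | .s t, .r u => u = t + 1
  | _, _ => False

/-- The heptagonal circular ladder `Γ_n`. -/
def Gamma (n : ℕ) : SimpleGraph (HCLVertex n) :=
  SimpleGraph.fromRel (gammaRel n)

/-- The extra edges `r_t q_{t+1}` added to `Γ_n` to obtain `Δ_n`. -/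
def deltaRel (n : ℕ) : HCLVertex n → HCLVertex n → Prop
  | .r t, .q u => u = t + 1
  | _, _ => False

/-- The convex polytope graph `Δ_n`, obtained from `Γ_n` by adding the edges `r_t q_{t+1}`. -/
def Delta (n : ℕ) : SimpleGraph (HCLVertex n) :=
  SimpleGraph.fromRel (fun v w => gammaRel n v w ∨ deltaRel n v w)

/-- `W` is a resolving set of `G`: every pair of distinct vertices is distinguished by
its distance to some vertex of `W`. -/
def IsResolving {V : Type*} (G : SimpleGraph V) (W : Set V) : Prop :=
  ∀ u v : V, u ≠ v → ∃ w ∈ W, G.dist w u ≠ G.dist w v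

/-- Distance from a vertex `x` to an edge `e = yz`: `min (d x y) (d x z)`. -/
noncomputable def edgeDist {V : Type*} (G : SimpleGraph V) (x : V) (e : Sym2 V) : ℕ :=
  Sym2.lift ⟨fun y z => min (G.dist x y) (G.dist x z), fun y z => min_comm _ _⟩ e

/-- `W` is an edge resolving set of `G`: every pair of distinct edges is distinguished by
its distance to some vertex of `W`. -/
def IsEdgeResolving {V : Type*} (G : SimpleGraph V) (W : Set V) : Prop :=
  ∀ e ∈ G.edgeSet, ∀ f ∈ G.edgeSet, e ≠ f → ∃ w ∈ W, edgeDist G w e ≠ edgeDist G w f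

namespace SimpleGraph

variable {V : Type*} {G : SimpleGraph V}

/-- A function vanishing at `a`, changing by at most one along edges and decreasing along some
edge at every other vertex is the distance to `a`. -/
theorem reachable_and_dist_eq_of_lipschitz_of_descent {a : V} {f : V → ℕ} (ha : f a = 0)
    (hlip : ∀ u v, G.Adj u v → f v ≤ f u + 1)
    (hdesc : ∀ v, v ≠ a → ∃ w, G.Adj w v ∧ f v = f w + 1) (v : V) :
    G.Reachable a v ∧ G.dist a v = f v := by
  have lower : ∀ {u v : V} (p : G.Walk u v), f v ≤ f u + p.length := by
    intro u v p
    induction p with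
    | nil => simp
    | cons h p ih =>
      have := hlip _ _ h
      rw [Walk.length_cons]
      omega
  have upper : ∀ k v, f v = k → ∃ p : G.Walk a v, p.length = k := by
    intro k
    induction k with
    | zero =>
      intro v hv
      by_cases h : v = a
      · subst h
        exact ⟨.nil, rfl⟩
      · obtain ⟨w, -, hw⟩ := hdesc v h
        omega
    | succ k ih =>
      intro v hv
      obtain ⟨w, hadj, hw⟩ := hdesc v (by rintro rfl; omega)
      obtain ⟨p, hp⟩ := ih w (by omega)
      exact ⟨p.concat hadj, by rw [Walk.length_concat, hp]⟩
  obtain ⟨p, hp⟩ := upper _ v rfl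
  obtain ⟨q, hq⟩ := p.reachable.exists_walk_length_eq_dist
  have h₁ := dist_le p
  have h₂ := lower q
  exact ⟨p.reachable, by omega⟩

end SimpleGraph

section EdgeDist

variable {V : Type*} {G : SimpleGraph V}

theorem edgeDist_mk (x y z : V) : edgeDist G x s(y, z) = min (G.dist x y) (G.dist x z) := rfl

theorem edgeDist_mk_left_or (hG : G.Connected) (b : V) {v x : V} (h : G.Adj v x) :
    edgeDist G b s(v, x) = G.dist b v ∨ edgeDist G b s(v, x) + 1 = G.dist b v := by
  have h₁ := hG.dist_triangle (u := b) (v := x) (w := v)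
  rw [SimpleGraph.dist_eq_one_iff_adj.2 h.symm] at h₁
  rw [edgeDist_mk]
  omega

/-- Of three edges at `v`, two are at the same distance from `b`, and all are at distance `0`
from `v`. -/
theorem not_isEdgeResolving_pair_of_three_neighbors (hG : G.Connected) {v x y z : V} (b : V)
    (hx : G.Adj v x) (hy : G.Adj v y) (hz : G.Adj v z) (hxy : x ≠ y) (hxz : x ≠ z)
    (hyz : y ≠ z) : ¬ IsEdgeResolving G {v, b} := by
  intro h
  have key : ∀ {x y}, G.Adj v x → G.Adj v y → x ≠ y →
      edgeDist G b s(v, x) ≠ edgeDist G b s(v, y) := by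
    intro x y hx hy hxy
    obtain ⟨w, hw, hne⟩ := h s(v, x) hx s(v, y) hy (by
      simpa [hxy] using fun _ => hx.ne')
    rcases hw with rfl | rfl
    · simp [edgeDist_mk] at hne
    · exact hne
  have := key hx hy hxy
  have := key hx hz hxz
  have := key hy hz hyz
  have := edgeDist_mk_left_or hG b hx
  have := edgeDist_mk_left_or hG b hy
  have := edgeDist_mk_left_or hG b hz
  omega

end EdgeDist

namespace HCLVertex

/-! Distances in `Γ_n` from a base vertex of degree two, which is `q_i` (`b = false`) or `s_i`
(`b = true`), to the vertex of each family whose index is `i + m` with `m < n`. -/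

/-- The successor of `m` modulo `n`, for `m < n`. -/
def next (n m : ℕ) : ℕ := if m + 1 = n then 0 else m + 1

/-- The number of steps along the `p`-cycle common to the shortest paths to index `m`. -/
def arc (b : Bool) (n m : ℕ) : ℕ := if b then min (m - 1) (n - m) else min m (n - m)

/-- The distance from the base vertex to the `p`-vertex at offset `m`. -/
def pDist (b : Bool) (n m : ℕ) : ℕ := if b then 3 + arc b n m else 1 + arc b n m

/-- The distance from the base vertex to the `q`-vertex at offset `m`. -/
def qDist (b : Bool) (n m : ℕ) : ℕ :=
  if b then min (2 + 2 * arc b n m) (4 + arc b n m) else if m = 0 then 0 else 2 + arc b n m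

/-- The distance from the base vertex to the `r`-vertex at offset `m`. -/
def rDist (b : Bool) (n m : ℕ) : ℕ :=
  min (1 + 2 * arc b n m) (if b then 5 + arc b n m else 3 + arc b n m)

/-- The distance from the base vertex to the `s`-vertex at offset `m`. -/
def sDist (b : Bool) (n m : ℕ) : ℕ :=
  if b && m == 0 then 0 else 1 + min (rDist b n m) (rDist b n (next n m))

/-- The distance from the base vertex to the edge of type `c` at offset `m`, in the numbering
of `gammaEdge`. -/
def offsetEdgeDist (b : Bool) (n : ℕ) (c : Fin 5) (m : ℕ) : ℕ :=
  match c with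
  | 0 => min (pDist b n m) (pDist b n (next n m))
  | 1 => min (pDist b n m) (qDist b n m)
  | 2 => min (qDist b n m) (rDist b n m)
  | 3 => min (rDist b n m) (sDist b n m)
  | 4 => min (sDist b n m) (rDist b n (next n m))

/-- The vertex `q_i` or `s_i`. -/
def base {n : ℕ} (b : Bool) (i : ZMod n) : HCLVertex n := if b then s i else q i

/-- The distance from `base b i`, as a function on the vertices. -/
def distFrom {n : ℕ} (b : Bool) (i : ZMod n) : HCLVertex n → ℕ
  | p t => pDist b n (t - i).val
  | q t => qDist b n (t - i).val
  | r t => rDist b n (t - i).val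
  | s t => sDist b n (t - i).val

/-- The five families of edges of `Γ_n`. -/
def gammaEdge {n : ℕ} (c : Fin 5) (t : ZMod n) : Sym2 (HCLVertex n) :=
  match c with
  | 0 => s(p t, p (t + 1))
  | 1 => s(p t, q t)
  | 2 => s(q t, r t)
  | 3 => s(r t, s t)
  | 4 => s(s t, r (t + 1))

theorem one_ne_zero_zmod {n : ℕ} (hn : 6 ≤ n) : (1 : ZMod n) ≠ 0 := by
  have : Fact (1 < n) := ⟨by omega⟩
  exact one_ne_zero

theorem two_ne_zero_zmod {n : ℕ} (hn : 6 ≤ n) : (2 : ZMod n) ≠ 0 := by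
  intro h
  have := (ZMod.natCast_eq_zero_iff 2 n).1 (by exact_mod_cast h)
  have := Nat.le_of_dvd (by norm_num) this
  omega

theorem gammaEdge_mem_edgeSet {n : ℕ} (hn : 6 ≤ n) (c : Fin 5) (t : ZMod n) : gammaEdge c t ∈ (Gamma n).edgeSet := by
  have := one_ne_zero_zmod hn
  fin_cases c <;> simp [gammaEdge, Gamma, gammaRel, this]

theorem gammaEdge_injective {n : ℕ} (hn : 6 ≤ n) {c c' : Fin 5} {t t' : ZMod n}
    (h : gammaEdge c t = gammaEdge c' t') : c = c' ∧ t = t' := by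
  have h1 := one_ne_zero_zmod hn
  have h2 := two_ne_zero_zmod hn
  fin_cases c <;> fin_cases c' <;> simp [gammaEdge] at h ⊢ <;> try grind
  all_goals exact h1 (by linear_combination h.2 - h.1)

theorem eq_gammaEdge_of_gammaRel {n : ℕ} {u v : HCLVertex n} (h : gammaRel n u v) :
    ∃ c t, s(u, v) = gammaEdge c t := by
  cases u <;> cases v <;> simp only [gammaRel] at h <;> subst h
  · exact ⟨0, _, rfl⟩
  · exact ⟨1, _, rfl⟩
  · exact ⟨2, _, rfl⟩
  · exact ⟨3, _, rfl⟩
  · exact ⟨4, _, rfl⟩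

theorem eq_gammaEdge_of_adj {n : ℕ} {u v : HCLVertex n} (h : (Gamma n).Adj u v) :
    ∃ c t, s(u, v) = gammaEdge c t := by
  rw [Gamma, SimpleGraph.fromRel_adj] at h
  obtain ⟨-, h | h⟩ := h
  · exact eq_gammaEdge_of_gammaRel h
  · rw [Sym2.eq_swap]
    exact eq_gammaEdge_of_gammaRel h

theorem val_add_one_sub {n : ℕ} (hn : 6 ≤ n) (t i : ZMod n) :
    (t + 1 - i).val = next n (t - i).val := by
  have : NeZero n := ⟨by omega⟩
  have : Fact (1 < n) := ⟨by omega⟩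
  have hlt := (t - i).val_lt
  rw [add_sub_right_comm, ZMod.val_add, ZMod.val_one, next]
  split_ifs with h
  · rw [h, Nat.mod_self]
  · exact Nat.mod_eq_of_lt (by omega)

set_option maxHeartbeats 1000000 in
theorem reachable_and_dist_base {n : ℕ} (hn : 6 ≤ n) (b : Bool) (i : ZMod n) (v : HCLVertex n) :
    (Gamma n).Reachable (base b i) v ∧ (Gamma n).dist (base b i) v = distFrom b i v := by
  have : NeZero n := ⟨by omega⟩
  have hadj : ∀ c t, gammaEdge c t ∈ (Gamma n).edgeSet := gammaEdge_mem_edgeSet hn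
  have hpp := fun t => hadj 0 t
  have hpq := fun t => hadj 1 t
  have hqr := fun t => hadj 2 t
  have hrs := fun t => hadj 3 t
  have hsr := fun t => hadj 4 t
  simp only [gammaEdge, SimpleGraph.mem_edgeSet] at hpp hpq hqr hrs hsr
  apply SimpleGraph.reachable_and_dist_eq_of_lipschitz_of_descent
  · cases b <;> simp [base, distFrom, qDist, sDist]
  · have key : ∀ c t, ∀ u v, s(u, v) = gammaEdge c t →
        distFrom b i v ≤ distFrom b i u + 1 ∧ distFrom b i u ≤ distFrom b i v + 1 := by
      intro c t u v h
      have hlt := (t - i).val_lt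
      have hs := val_add_one_sub hn t i
      fin_cases c <;> simp only [gammaEdge, Sym2.eq_iff] at h <;>
        rcases h with ⟨rfl, rfl⟩ | ⟨rfl, rfl⟩ <;>
        simp only [distFrom, hs, pDist, qDist, rDist, sDist, arc, next] <;>
        cases b <;> grind
    intro u v h
    obtain ⟨c, t, h⟩ := eq_gammaEdge_of_adj h
    exact (key c t u v h).1
  · intro v hv
    by_contra! hcon
    cases v with
    | p t =>
      have h₁ := hcon _ (by simpa using hpp (t - 1))
      have h₂ := hcon _ (hpp t).symm
      have h₃ := hcon _ (hpq t).symm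
      have hs := val_add_one_sub hn t i
      have hs' := val_add_one_sub hn (t - 1) i
      have hlt := (t - 1 - i).val_lt
      rw [sub_add_cancel] at hs'
      simp only [distFrom, hs] at h₁ h₂ h₃
      rw [hs'] at h₁ h₂ h₃
      generalize (t - 1 - i).val = m at *
      simp only [pDist, qDist, arc, next] at h₁ h₂ h₃
      cases b <;> grind
    | q t =>
      have h₁ := hcon _ (hpq t)
      have h₂ := hcon _ (hqr t).symm
      have hlt := (t - i).val_lt
      have h₀ : b = false → (t - i).val ≠ 0 := by
        rintro rfl h
        rw [ZMod.val_eq_zero, sub_eq_zero] at h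
        exact hv (by rw [h]; rfl)
      simp only [distFrom] at h₁ h₂
      generalize (t - i).val = m at *
      simp only [pDist, qDist, rDist, arc] at h₁ h₂
      cases b <;> grind
    | r t =>
      have h₁ := hcon _ (hqr t)
      have h₂ := hcon _ (hrs t).symm
      have h₃ := hcon _ (by simpa using hsr (t - 1))
      have hs' := val_add_one_sub hn (t - 1) i
      have hlt := (t - 1 - i).val_lt
      rw [sub_add_cancel] at hs'
      simp only [distFrom] at h₁ h₂ h₃
      rw [hs'] at h₁ h₂ h₃
      generalize (t - 1 - i).val = m at *
      have e : m + 1 = n ∧ next n m = 0 ∧ next n 0 = 1 ∨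
          m + 2 = n ∧ next n m = m + 1 ∧ next n (m + 1) = 0 ∨
          m + 2 < n ∧ next n m = m + 1 ∧ next n (m + 1) = m + 2 := by
        grind [next]
      clear hv hcon hpp hpq hqr hrs hsr hadj hs'
      rcases e with ⟨e, e₁, e₂⟩ | ⟨e, e₁, e₂⟩ | ⟨e, e₁, e₂⟩ <;>
        cases b <;> simp [qDist, rDist, sDist, arc, e₁, e₂] at h₁ h₂ h₃ <;> grind
    | s t =>
      have h₁ := hcon _ (hrs t)
      have h₂ := hcon _ (hsr t).symm
      have h₀ : b = true → (t - i).val ≠ 0 := by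
        rintro rfl h
        rw [ZMod.val_eq_zero, sub_eq_zero] at h
        exact hv (by rw [h]; rfl)
      simp only [distFrom, val_add_one_sub hn t i, sDist] at h₁ h₂
      have h₃ : (b && (t - i).val == 0) = false := by simpa using h₀
      simp only [h₃, Bool.false_eq_true, if_false] at h₁ h₂
      omega

/-- Some two distinct edges are equidistant from the base vertices of types `b` and `b'` when the
index of the second one exceeds that of the first by `k`. The search runs over the difference `d`
of the indices of the edges first, since adjacent edges nearly always suffice. -/
def HasEquidistantEdges (b b' : Bool) (n k : ℕ) : Prop :=
  ∃ d ∈ List.range n, ∃ m ∈ List.range n, ∃ c c' : Fin 5, (d ≠ 0 ∨ c ≠ c') ∧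
    offsetEdgeDist b n c m = offsetEdgeDist b n c' ((m + d) % n) ∧
    offsetEdgeDist b' n c ((m + (n - k)) % n) = offsetEdgeDist b' n c' ((m + d + (n - k)) % n)

instance (b b' : Bool) (n k : ℕ) : Decidable (HasEquidistantEdges b b' n k) := by
  unfold HasEquidistantEdges
  infer_instance

theorem hasEquidistantEdges_of_le_twenty :
    ∀ n < 21, 6 ≤ n → ∀ k < n, ∀ b b' : Bool, HasEquidistantEdges b b' n k := by
  decide +kernel

theorem offsetEdgeDist_at_r {n m : ℕ} (b : Bool) (h₁ : 6 ≤ m) (h₂ : m + 5 ≤ n) :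
    offsetEdgeDist b n 3 m = offsetEdgeDist b n 4 (m - 1) := by
  have e₁ : next n (m - 1) = m := by rw [next, if_neg (by omega)]; omega
  have e₂ : next n m = m + 1 := by rw [next, if_neg (by omega)]
  have e₃ : (b && m == 0) = false := by simp; omega
  have e₄ : (b && m - 1 == 0) = false := by simp; omega
  have h₃ : rDist b n m ≤ 1 + rDist b n (m + 1) := by
    cases b <;> simp [rDist, arc] <;> omega
  have h₄ : rDist b n m ≤ 1 + rDist b n (m - 1) := by
    cases b <;> simp [rDist, arc] <;> omega
  simp only [offsetEdgeDist, sDist, e₁, e₂, e₃, e₄, Bool.false_eq_true, if_false]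
  omega

theorem exists_offsetEdgeDist_eq {n k : ℕ} (hn : 6 ≤ n) (hk : k < n) (b b' : Bool) :
    ∃ m < n, ∃ m' < n, ∃ c c' : Fin 5, (m ≠ m' ∨ c ≠ c') ∧
      offsetEdgeDist b n c m = offsetEdgeDist b n c' m' ∧
      offsetEdgeDist b' n c ((m + (n - k)) % n) =
        offsetEdgeDist b' n c' ((m' + (n - k)) % n) := by
  rcases lt_or_ge n 21 with h | h
  · obtain ⟨d, hd, m, hm, c, c', hne, h₁, h₂⟩ :=
      hasEquidistantEdges_of_le_twenty n h hn k hk b b'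
    rw [List.mem_range] at hd hm
    refine ⟨m, hm, (m + d) % n, Nat.mod_lt _ (by omega), c, c', ?_, h₁, ?_⟩
    · refine hne.imp_left fun hd0 he => ?_
      rcases lt_or_ge (m + d) n with hlt | hge
      · rw [Nat.mod_eq_of_lt hlt] at he
        omega
      · rw [Nat.mod_eq_sub_mod hge, Nat.mod_eq_of_lt (by omega)] at he
        omega
    · rw [h₂, Nat.mod_add_mod]
  · have key : ∀ m x, 6 ≤ m → m + 5 ≤ n → 6 ≤ x → x + 5 ≤ n →
        (m + (n - k)) % n = x → (m - 1 + (n - k)) % n = x - 1 →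
        ∃ m < n, ∃ m' < n, ∃ c c' : Fin 5, (m ≠ m' ∨ c ≠ c') ∧
          offsetEdgeDist b n c m = offsetEdgeDist b n c' m' ∧
          offsetEdgeDist b' n c ((m + (n - k)) % n) =
            offsetEdgeDist b' n c' ((m' + (n - k)) % n) := by
      intro m x hm₁ hm₂ hx₁ hx₂ e₁ e₂
      refine ⟨m, by omega, m - 1, by omega, 3, 4, Or.inr (by decide),
        offsetEdgeDist_at_r b hm₁ hm₂, ?_⟩
      rw [e₁, e₂]
      exact offsetEdgeDist_at_r b' hx₁ hx₂
    rcases lt_or_ge k 11 with hk' | hk'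
    · refine key (k + 6) 6 (by omega) (by omega) (by omega) (by omega) ?_ ?_
      · rw [show k + 6 + (n - k) = 6 + n by omega, Nat.add_mod_right, Nat.mod_eq_of_lt (by omega)]
      · rw [show k + 6 - 1 + (n - k) = 5 + n by omega, Nat.add_mod_right,
          Nat.mod_eq_of_lt (by omega)]
    · exact key 6 (6 + (n - k)) (by omega) (by omega) (by omega) (by omega)
        (Nat.mod_eq_of_lt (by omega)) (by rw [Nat.mod_eq_of_lt] <;> omega)

theorem connected_gamma {n : ℕ} (hn : 6 ≤ n) : (Gamma n).Connected := by
  have hp := fun v => (reachable_and_dist_base hn false 0 v).1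
  have : Nonempty (HCLVertex n) := ⟨q 0⟩
  exact ⟨fun u v => (hp u).symm.trans (hp v)⟩

theorem edgeDist_gammaEdge {n : ℕ} (hn : 6 ≤ n) (b : Bool) (i : ZMod n) (c : Fin 5)
    (t : ZMod n) :
    edgeDist (Gamma n) (base b i) (gammaEdge c t) = offsetEdgeDist b n c (t - i).val := by
  fin_cases c <;>
    simp [gammaEdge, edgeDist_mk, (reachable_and_dist_base hn _ _ _).2, distFrom, offsetEdgeDist, val_add_one_sub hn]

theorem not_isEdgeResolving_base_pair {n : ℕ} (hn : 6 ≤ n) (b b' : Bool) (i j : ZMod n) :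
    ¬ IsEdgeResolving (Gamma n) {base b i, base b' j} := by
  have : NeZero n := ⟨by omega⟩
  intro h
  obtain ⟨m, hm, m', hm', c, c', hne, h₁, h₂⟩ :=
    exists_offsetEdgeDist_eq hn (j - i).val_lt b b'
  have off : ∀ m < n, (i + (m : ZMod n) - i).val = m ∧
      (i + (m : ZMod n) - j).val = (m + (n - (j - i).val)) % n := by
    intro m hm
    refine ⟨by rw [add_sub_cancel_left, ZMod.val_natCast, Nat.mod_eq_of_lt hm], ?_⟩
    rw [← ZMod.val_natCast]
    congr 1
    rw [Nat.cast_add, Nat.cast_sub (j - i).val_lt.le, ZMod.natCast_self, ZMod.natCast_zmod_val]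
    ring
  obtain ⟨w, hw, hd⟩ := h _ (gammaEdge_mem_edgeSet hn c (i + m)) _
    (gammaEdge_mem_edgeSet hn c' (i + m')) (by
      intro he
      obtain ⟨hc, ht⟩ := gammaEdge_injective hn he
      refine hne.elim (fun hmm => hmm ?_) (fun hcc => hcc hc)
      rw [← (off m hm).1, ht, (off m' hm').1])
  rcases hw with rfl | rfl
  · rw [edgeDist_gammaEdge hn, edgeDist_gammaEdge hn, (off m hm).1, (off m' hm').1] at hd
    exact hd h₁
  · rw [edgeDist_gammaEdge hn, edgeDist_gammaEdge hn, (off m hm).2, (off m' hm').2] at hd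
    exact hd h₂

/-- Every vertex has degree two or is adjacent to three distinct vertices. -/
theorem eq_base_or_three_neighbors {n : ℕ} (hn : 6 ≤ n) (v : HCLVertex n) :
    (∃ b i, v = base b i) ∨ ∃ x y z, (Gamma n).Adj v x ∧ (Gamma n).Adj v y ∧
      (Gamma n).Adj v z ∧ x ≠ y ∧ x ≠ z ∧ y ≠ z := by
  have h1 := one_ne_zero_zmod hn
  have h2 := two_ne_zero_zmod hn
  cases v with
  | p t =>
    refine Or.inr ⟨p (t + 1), p (t - 1), q t, ?_⟩
    have : t + 1 ≠ t - 1 := fun h => h2 (by linear_combination h)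
    have : t ≠ t - 1 := fun h => h1 (by linear_combination h)
    simp_all [Gamma, gammaRel]
  | q t => exact Or.inl ⟨false, t, rfl⟩
  | r t =>
    refine Or.inr ⟨q t, s t, s (t - 1), ?_⟩
    have : t ≠ t - 1 := fun h => h1 (by linear_combination h)
    simp [Gamma, gammaRel, this]
  | s t => exact Or.inl ⟨true, t, rfl⟩

end HCLVertex

open HCLVertex in
theorem not_isEdgeResolving_gamma_pair {n : ℕ} (hn : 6 ≤ n) (u v : HCLVertex n) :
    ¬ IsEdgeResolving (Gamma n) {u, v} := by
  rcases eq_base_or_three_neighbors hn u with ⟨b, i, rfl⟩ | ⟨x, y, z, hx, hy, hz, h₁, h₂, h₃⟩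
  · rcases eq_base_or_three_neighbors hn v with
      ⟨b', j, rfl⟩ | ⟨x, y, z, hx, hy, hz, h₁, h₂, h₃⟩
    · exact not_isEdgeResolving_base_pair hn b b' i j
    · rw [Set.pair_comm]
      exact not_isEdgeResolving_pair_of_three_neighbors (connected_gamma hn) _ hx hy hz h₁ h₂ h₃
  · exact not_isEdgeResolving_pair_of_three_neighbors (connected_gamma hn) _ hx hy hz h₁ h₂ h₃

theorem gamma_no_two_element_edge_resolving (n : ℕ) (hn : 6 ≤ n) :
    ∀ W : Finset (HCLVertex n), W.card = 2 → ¬ IsEdgeResolving (Gamma n) ↑W := by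
  intro W hW
  obtain ⟨u, v, -, rfl⟩ := Finset.card_eq_two.1 hW
  rw [Finset.coe_pair]
  exact not_isEdgeResolving_gamma_pair hn u v
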